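/- Let δ > 0, let A ∈ ℝ^{n×n}, C ∈ ℝ^{m×n}, and let P ∈ ℝ^{n×n} be symmetric positive definite and satisfy the algebraic Riccati equation AP + PAᵀ + I_n − PCᵀCP = 0. Set L := max{1, δ⁻¹} · PCᵀ. Then for every p, every connected interconnection Γ ∈ ℝ^{p×p} all of whose nonzero eigenvalues λ (over ℂ) satisfy Re(λ) ≤ −δ, every r ∈ ℝ^p with rᵀΓ = 0 and rᵀ1 = 1, and every initial vector x(0) ∈ ℝ^{pn}, the solution x(t) = exp(t(I_p ⊗ A + Γ ⊗ LC)) x(0) satisfies |x(t) − (1rᵀ ⊗ exp(tA)) x(0)| → 0 as t → ∞; in particular the blocks x_i(t) synchronize to x̄(t) = (rᵀ ⊗ exp(tA)) x(0). -/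

import Mathlib

open Matrix Filter Topology
open scoped Kronecker

/-- `Γ` is an interconnection: off-diagonal entries are nonnegative and each diagonal
entry is minus the sum of the other entries in its row (equivalently, rows sum to zero). -/
def IsInterconnection {p : ℕ} (Γ : Matrix (Fin p) (Fin p) ℝ) : Prop :=
  (∀ i j, i ≠ j → 0 ≤ Γ i j) ∧ ∀ i, ∑ j, Γ i j = 0

/-- `Γ` is a connected interconnection: it is an interconnection and its graph
(with an edge `(i, j)` whenever `Γ i j > 0`) has a node reachable by a directed
path from every other node. -/
def IsConnectedInterconnection {p : ℕ} (Γ : Matrix (Fin p) (Fin p) ℝ) : Prop :=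
  IsInterconnection Γ ∧
    ∃ k : Fin p, ∀ i : Fin p, Relation.ReflTransGen (fun a b => 0 < Γ a b) i k



section helpers

theorem hasSum_matrix_exp {𝕜 ι : Type*} [RCLike 𝕜] [Fintype ι] [DecidableEq ι]
    (X : Matrix ι ι 𝕜) :
    HasSum (fun k : ℕ => ((k.factorial : 𝕜)⁻¹) • X ^ k) (NormedSpace.exp X) := by
  open scoped Matrix.Norms.Operator in
  with_unfolding_all exact NormedSpace.exp_series_hasSum_exp' (𝕂 := 𝕜) X

theorem matrix_exp_semiconj {𝕜 ι : Type*} [RCLike 𝕜] [Fintype ι] [DecidableEq ι]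
    {X Y Q : Matrix ι ι 𝕜} (h : X * Q = Q * Y) :
    NormedSpace.exp X * Q = Q * NormedSpace.exp Y := by
  have h1 := (hasSum_matrix_exp X).mul_right Q
  have h2 := (hasSum_matrix_exp Y).mul_left Q
  refine h1.unique ?_
  convert h2 using 2 with k
  have : X ^ k * Q = Q * Y ^ k := by
    induction k with
    | zero => simp
    | succ k ih => rw [pow_succ, mul_assoc, h, ← mul_assoc, ih, mul_assoc, pow_succ]
  simp [this]

theorem matrix_exp_map {ι : Type*} [Fintype ι] [DecidableEq ι] (X : Matrix ι ι ℝ) :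
    (NormedSpace.exp X).map Complex.ofReal = NormedSpace.exp (X.map Complex.ofReal) := by
  have h1 := (hasSum_matrix_exp X).map (Complex.ofRealHom.mapMatrix (m := ι))
    (by
      change Continuous fun Y : Matrix ι ι ℝ => Y.map Complex.ofReal
      exact continuous_id.matrix_map Complex.continuous_ofReal)
  refine h1.unique ?_
  convert hasSum_matrix_exp (X.map Complex.ofReal) using 2 with k
  have : (X.map Complex.ofReal) = Complex.ofRealHom.mapMatrix X := rfl
  rw [this, ← map_pow]
  ext i j
  simp

theorem matrix_exp_one_kron {ι κ : Type*} [Fintype ι] [DecidableEq ι] [Fintype κ]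
    [DecidableEq κ] (X : Matrix κ κ ℝ) :
    (1 : Matrix ι ι ℝ) ⊗ₖ NormedSpace.exp X = NormedSpace.exp ((1 : Matrix ι ι ℝ) ⊗ₖ X) := by
  let f : Matrix κ κ ℝ →+ Matrix (ι × κ) (ι × κ) ℝ :=
    { toFun := fun Y => (1 : Matrix ι ι ℝ) ⊗ₖ Y
      map_zero' := by simp
      map_add' := fun a b => by simp [kronecker_add] }
  have h1 := (hasSum_matrix_exp X).map f (by
      change Continuous fun Y : Matrix κ κ ℝ => (1 : Matrix ι ι ℝ) ⊗ₖ Y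
      refine continuous_pi fun i => continuous_pi fun j => ?_
      simp only [kroneckerMap_apply]
      exact continuous_const.mul (continuous_apply_apply _ _))
  refine h1.unique ?_
  convert hasSum_matrix_exp ((1 : Matrix ι ι ℝ) ⊗ₖ X) using 2 with k
  have : ((1 : Matrix ι ι ℝ) ⊗ₖ X) ^ k = (1 : Matrix ι ι ℝ) ⊗ₖ (X ^ k) := by
    induction k with
    | zero => simp
    | succ k ih => rw [pow_succ, ih, ← mul_kronecker_mul, pow_succ, one_mul]
  rw [this]
  simp [f, kronecker_smul]

theorem tendsto_exp_genEig {ι : Type*} [Fintype ι] [DecidableEq ι] (M : Matrix ι ι ℂ) (s : ℂ)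
    (hs : s.re < 0) (k : ℕ) (v : ι → ℂ) (hv : ((M - s • 1) ^ k) *ᵥ v = 0) :
    Tendsto (fun t : ℝ => NormedSpace.exp ((t : ℂ) • M) *ᵥ v) atTop (𝓝 0) := by
  set N := M - s • 1 with hN
  have key : ∀ t : ℝ, NormedSpace.exp ((t : ℂ) • M) *ᵥ v =
      ∑ j ∈ Finset.range k,
        (Complex.exp (t * s) * (t : ℂ) ^ j) • ((j.factorial : ℂ)⁻¹ • (N ^ j *ᵥ v)) := by
    intro t
    have e1 : (t : ℂ) • M = ((t * s : ℂ) • (1 : Matrix ι ι ℂ)) + (t : ℂ) • N := by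
      rw [hN, smul_sub, smul_smul]; abel
    have e2 : NormedSpace.exp ((t * s : ℂ) • (1 : Matrix ι ι ℂ)) = Complex.exp (t * s) • 1 := by
      rw [smul_one_eq_diagonal, Matrix.exp_diagonal, smul_one_eq_diagonal]
      congr 1
      ext i
      rw [Pi.coe_exp, Complex.exp_eq_exp_ℂ]
    have e3 : NormedSpace.exp ((t : ℂ) • N) *ᵥ v =
        ∑ j ∈ Finset.range k, ((j.factorial : ℂ)⁻¹ • ((t : ℂ) • N) ^ j) *ᵥ v := by
      have h1 := (hasSum_matrix_exp ((t : ℂ) • N)).map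
        ((Matrix.mulVecBilin ℂ ℂ).flip v) (by
          change Continuous fun Y : Matrix ι ι ℂ => Y *ᵥ v
          exact continuous_id.matrix_mulVec continuous_const)
      refine h1.unique (hasSum_sum_of_ne_finset_zero ?_)
      intro j hj
      have hj : k ≤ j := by simpa using hj
      obtain ⟨l, rfl⟩ := Nat.exists_eq_add_of_le' hj
      change ((((l + k).factorial : ℂ)⁻¹ • ((t : ℂ) • N) ^ (l + k))) *ᵥ v = 0
      rw [smul_pow, pow_add N, smul_mulVec, smul_mulVec, ← mulVec_mulVec, hv]
      simp
    rw [e1, Matrix.exp_add_of_commute _ _ ((Commute.one_left _).smul_left _), e2,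
      smul_mul_assoc, one_mul, smul_mulVec, e3, Finset.smul_sum]
    refine Finset.sum_congr rfl fun j _ => ?_
    rw [smul_pow, smul_mulVec, smul_mulVec, smul_smul, smul_smul, smul_smul]
    congr 1
    ring
  simp_rw [key]
  rw [show (0 : ι → ℂ) = ∑ j ∈ Finset.range k,
    (0 : ℂ) • ((j.factorial : ℂ)⁻¹ • (N ^ j *ᵥ v)) by simp]
  refine tendsto_finsetSum _ fun j _ => Tendsto.smul_const ?_ _
  rw [tendsto_zero_iff_norm_tendsto_zero]
  have h := tendsto_rpow_mul_exp_neg_mul_atTop_nhds_zero j (-s.re) (by linarith)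
  refine h.congr' ?_
  filter_upwards [eventually_ge_atTop 0] with t ht
  rw [norm_mul, Complex.norm_exp, norm_pow, Complex.norm_real, Real.norm_of_nonneg ht,
    Real.rpow_natCast, mul_comm]
  simp [mul_comm]

theorem tendsto_exp_hurwitz {ι : Type*} [Fintype ι] [DecidableEq ι] (M : Matrix ι ι ℂ)
    (h : ∀ (s : ℂ) (v : ι → ℂ), v ≠ 0 → M *ᵥ v = s • v → s.re < 0) (v : ι → ℂ) :
    Tendsto (fun t : ℝ => NormedSpace.exp ((t : ℂ) • M) *ᵥ v) atTop (𝓝 0) := by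
  let f : Module.End ℂ (ι → ℂ) := Matrix.toLin' M
  have hv : v ∈ ⨆ μ : ℂ, f.maxGenEigenspace μ := by
    rw [Module.End.iSup_maxGenEigenspace_eq_top]; trivial
  induction hv using Submodule.iSup_induction' with
  | zero => simp
  | add x y _ _ hx hy => simpa [mulVec_add] using hx.add hy
  | mem s x hx =>
    by_cases hx0 : x = 0
    · subst hx0; simp
    have hs : s.re < 0 := by
      have h1 : f.HasUnifEigenvalue s ⊤ := by
        intro hb
        apply hx0
        rw [Module.End.maxGenEigenspace, hb] at hx
        simpa using hx
      have h2 : f.HasEigenvalue s := h1.lt zero_lt_one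
      obtain ⟨w, hw⟩ := h2.exists_hasEigenvector
      refine h s w hw.2 ?_
      simpa [f] using hw.apply_eq_smul
    obtain ⟨k, hk⟩ := (Module.End.mem_maxGenEigenspace f s x).1 hx
    refine tendsto_exp_genEig M s hs k x ?_
    have : f - s • 1 = Matrix.toLin' (M - s • 1) := by
      simp [f, Module.End.one_eq_id]
    rwa [this, ← Matrix.toLin'_pow, Matrix.toLin'_apply] at hk

end helpers

section helpers2

open scoped ComplexOrder


theorem exists_left_eig {ι : Type*} [Fintype ι] [DecidableEq ι] (M : Matrix ι ι ℂ) (s : ℂ)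
    (h : ∃ v, v ≠ 0 ∧ M *ᵥ v = s • v) : ∃ w, w ≠ 0 ∧ w ᵥ* M = s • w := by
  obtain ⟨v, hv, hM⟩ := h
  have h1 : ∃ v, v ≠ 0 ∧ (M - s • 1) *ᵥ v = 0 :=
    ⟨v, hv, by rw [sub_mulVec, hM, smul_mulVec, one_mulVec, sub_self]⟩
  obtain ⟨w, hw, h2⟩ := exists_vecMul_eq_zero_iff.2 (exists_mulVec_eq_zero_iff.1 h1)
  refine ⟨w, hw, ?_⟩
  rwa [vecMul_sub, vecMul_smul, vecMul_one, sub_eq_zero] at h2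

theorem exists_right_eig {ι : Type*} [Fintype ι] [DecidableEq ι] (M : Matrix ι ι ℂ) (s : ℂ)
    (h : ∃ v, v ≠ 0 ∧ v ᵥ* M = s • v) : ∃ w, w ≠ 0 ∧ M *ᵥ w = s • w := by
  obtain ⟨v, hv, hM⟩ := h
  obtain ⟨w, hw, h2⟩ := exists_left_eig Mᵀ s ⟨v, hv, by rwa [mulVec_transpose]⟩
  exact ⟨w, hw, by rwa [vecMul_transpose] at h2⟩

theorem exists_common_eig {ι : Type*} [Fintype ι] [DecidableEq ι] (X Y : Matrix ι ι ℂ)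
    (hXY : Commute X Y) (s : ℂ) (h : ∃ v, v ≠ 0 ∧ X *ᵥ v = s • v) :
    ∃ (l : ℂ) (w : ι → ℂ), w ≠ 0 ∧ X *ᵥ w = s • w ∧ Y *ᵥ w = l • w := by
  obtain ⟨v, hv, hX⟩ := h
  let E : Submodule ℂ (ι → ℂ) := LinearMap.ker (X.mulVecLin - s • LinearMap.id)
  have hE : ∀ w, w ∈ E ↔ X *ᵥ w = s • w := by
    intro w; simp [E, sub_eq_zero]
  have hmap : ∀ w ∈ E, Y.mulVecLin w ∈ E := by
    intro w hw
    rw [hE] at hw ⊢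
    rw [mulVecLin_apply, mulVec_mulVec, hXY.eq, ← mulVec_mulVec, hw, mulVec_smul]
  have : Nontrivial E := ⟨⟨⟨v, (hE v).2 hX⟩, 0, fun h => hv (congrArg Subtype.val h)⟩⟩
  obtain ⟨l, hl⟩ := Module.End.exists_eigenvalue (Y.mulVecLin.restrict hmap)
  obtain ⟨w, hw⟩ := hl.exists_hasEigenvector
  refine ⟨l, w, fun h => hw.2 (Subtype.ext h), (hE _).1 w.2, ?_⟩
  exact congrArg Subtype.val hw.apply_eq_smul

theorem hurwitz_kron {ι κ : Type*} [Fintype ι] [DecidableEq ι] [Fintype κ] [DecidableEq κ]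
    (G : Matrix ι ι ℂ) (A K : Matrix κ κ ℂ)
    (h : ∀ (l : ℂ) (w : ι → ℂ), w ≠ 0 → w ᵥ* G = l • w →
      ∀ (s : ℂ) (u : κ → ℂ), u ≠ 0 → Aᵀ *ᵥ u + l • (Kᵀ *ᵥ u) = s • u → s.re < 0)
    (s : ℂ) (v : ι × κ → ℂ) (hv : v ≠ 0)
    (hM : ((1 : Matrix ι ι ℂ) ⊗ₖ A + G ⊗ₖ K) *ᵥ v = s • v) : s.re < 0 := by
  obtain ⟨w, hw, hwM⟩ := exists_left_eig _ s ⟨v, hv, hM⟩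
  rw [← mulVec_transpose] at hwM
  have hT : ((1 : Matrix ι ι ℂ) ⊗ₖ A + G ⊗ₖ K)ᵀ =
      (1 : Matrix ι ι ℂ) ⊗ₖ Aᵀ + ((1 : Matrix ι ι ℂ) ⊗ₖ Kᵀ) * (Gᵀ ⊗ₖ (1 : Matrix κ κ ℂ)) := by
    rw [← mul_kronecker_mul, one_mul, mul_one, transpose_add, ← kroneckerMap_transpose,
      ← kroneckerMap_transpose, transpose_one]
  have hcomm : Commute ((1 : Matrix ι ι ℂ) ⊗ₖ A + G ⊗ₖ K)ᵀ (Gᵀ ⊗ₖ (1 : Matrix κ κ ℂ)) := by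
    rw [hT, Commute, SemiconjBy]
    simp only [add_mul, mul_add, ← mul_kronecker_mul, one_mul, mul_one]
  obtain ⟨l, z, hz, hz1, hz2⟩ := exists_common_eig _ _ hcomm s ⟨w, hw, hwM⟩
  rw [hT, add_mulVec, ← mulVec_mulVec, hz2, mulVec_smul] at hz1
  obtain ⟨⟨i, k⟩, hik⟩ := Function.ne_iff.1 hz
  have e1 : ∀ (B : Matrix κ κ ℂ) (i : ι) (k : κ),
      (((1 : Matrix ι ι ℂ) ⊗ₖ B) *ᵥ z) (i, k) = (B *ᵥ fun k => z (i, k)) k := by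
    intro B i k
    simp [mulVec, dotProduct, Fintype.sum_prod_type, Matrix.one_apply]
  have e2 : ∀ (B : Matrix ι ι ℂ) (i : ι) (k : κ),
      ((B ⊗ₖ (1 : Matrix κ κ ℂ)) *ᵥ z) (i, k) = (B *ᵥ fun i => z (i, k)) i := by
    intro B i k
    simp [mulVec, dotProduct, Fintype.sum_prod_type, Matrix.one_apply]
  refine h l (fun i => z (i, k)) (fun h0 => hik (congrFun h0 i)) ?_ s (fun k => z (i, k))
    (fun h0 => hik (congrFun h0 k)) ?_
  · ext i'
    rw [← mulVec_transpose, ← e2, hz2]; rfl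
  · ext k'
    have := congrFun hz1 (i, k')
    simp only [Pi.add_apply, Pi.smul_apply, e1] at this ⊢
    exact this

theorem star_quadForm {ι : Type*} [Fintype ι] (X : Matrix ι ι ℂ) (u : ι → ℂ) :
    star (star u ⬝ᵥ (X *ᵥ u)) = star u ⬝ᵥ (Xᴴ *ᵥ u) := by
  rw [← star_dotProduct_star, star_star, star_mulVec, ← dotProduct_mulVec]

theorem quadForm_re_pos {n : ℕ} (P : Matrix (Fin n) (Fin n) ℝ) (hP : P.PosDef)
    (u : Fin n → ℂ) (hu : u ≠ 0) : 0 < (star u ⬝ᵥ (P.map Complex.ofReal *ᵥ u)).re := by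
  have e : (star u ⬝ᵥ (P.map Complex.ofReal *ᵥ u)).re =
      (fun i => (u i).re) ⬝ᵥ (P *ᵥ fun i => (u i).re)
        + (fun i => (u i).im) ⬝ᵥ (P *ᵥ fun i => (u i).im) := by
    simp [mulVec, dotProduct, Finset.sum_add_distrib]
  rw [e]
  have h0 : ∀ x : Fin n → ℝ, 0 ≤ x ⬝ᵥ (P *ᵥ x) := fun x => by
    simpa using hP.posSemidef.dotProduct_mulVec_nonneg x
  have h1 : ∀ x : Fin n → ℝ, x ≠ 0 → 0 < x ⬝ᵥ (P *ᵥ x) := fun x hx => by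
    simpa using hP.dotProduct_mulVec_pos hx
  by_cases hx : (fun i => (u i).re) = 0
  · have hy : (fun i => (u i).im) ≠ 0 := fun hy => hu (by
      ext i
      exact Complex.ext (congrFun hx i) (congrFun hy i))
    linarith [h0 (fun i => (u i).re), h1 _ hy]
  · linarith [h0 (fun i => (u i).im), h1 _ hx]

theorem lyapunov_step {n m : ℕ} (A : Matrix (Fin n) (Fin n) ℝ) (C : Matrix (Fin m) (Fin n) ℝ)
    (P : Matrix (Fin n) (Fin n) ℝ) (hPsymm : Pᵀ = P) (hPpos : P.PosDef)
    (hRiccati : A * P + P * Aᵀ + 1 - P * Cᵀ * C * P = 0) (c : ℝ) (l s : ℂ)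
    (hc : c * l.re ≤ -1) (u : Fin n → ℂ) (hu : u ≠ 0)
    (h : (A.map Complex.ofReal)ᵀ *ᵥ u
      + l • ((((c • (P * Cᵀ)) * C).map Complex.ofReal)ᵀ *ᵥ u) = s • u) : s.re < 0 := by
  set a := A.map Complex.ofReal with ha
  set d := C.map Complex.ofReal with hd
  set q := P.map Complex.ofReal with hq
  have hqT : qᵀ = q := by rw [hq, ← Matrix.transpose_map, hPsymm]
  have hqH : qᴴ = q := by
    ext i j
    have := congrFun (congrFun hPsymm i) j
    simp only [transpose_apply] at this
    simp [hq, conjTranspose_apply, this]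
  have haH : aᴴ = aᵀ := by ext i j; simp [ha]
  have hdH : dᴴ = dᵀ := by ext i j; simp [hd]
  have hK : (((c • (P * Cᵀ)) * C).map Complex.ofReal)ᵀ = (c : ℂ) • (dᵀ * d * q) := by
    have : (((c • (P * Cᵀ)) * C).map Complex.ofReal) = (c : ℂ) • (q * dᵀ * d) := by
      rw [hq, hd]
      change (c • (P * Cᵀ) * C).map Complex.ofRealHom = (c : ℂ) • (P.map Complex.ofRealHom
        * Cᵀ.map Complex.ofRealHom * C.map Complex.ofRealHom)
      rw [← Matrix.map_mul, ← Matrix.map_mul]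
      ext i j
      rw [Matrix.smul_mul]
      simp only [map_apply, Matrix.smul_apply, smul_eq_mul, map_mul]
      rfl
    rw [this]
    simp [transpose_mul, hqT, Matrix.mul_assoc]
  have hR : a * q + q * aᵀ = q * dᵀ * d * q - 1 := by
    have h0 := congrArg Complex.ofRealHom.mapMatrix hRiccati
    have h1 : a * q + q * aᵀ + 1 - q * dᵀ * d * q = 0 := by
      rw [map_sub, map_add, map_add, map_mul, map_mul, map_mul, map_one, map_zero] at h0
      have h2 : Complex.ofRealHom.mapMatrix (P * Cᵀ * C) = q * dᵀ * d := by
        change (P * Cᵀ * C).map Complex.ofRealHom = _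
        rw [Matrix.map_mul, Matrix.map_mul]; rfl
      rw [h2] at h0
      exact h0
    rw [← sub_eq_zero, ← h1]; abel
  rw [hK] at h
  set E : ℂ := star u ⬝ᵥ (q *ᵥ (aᵀ *ᵥ u)) with hE
  set z : ℂ := star u ⬝ᵥ (q *ᵥ ((dᵀ * d * q) *ᵥ u)) with hz
  set Q : ℂ := star u ⬝ᵥ (q *ᵥ u) with hQ
  have main : s * Q = E + l * (c * z) := by
    have := congrArg (fun y => star u ⬝ᵥ (q *ᵥ y)) h
    simp only [mulVec_add, mulVec_smul, smul_mulVec, dotProduct_add, dotProduct_smul,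
      smul_eq_mul] at this
    rw [hQ, hE, hz, ← this]
  have hEs : star E = star u ⬝ᵥ ((a * q) *ᵥ u) := by
    rw [hE, mulVec_mulVec, star_quadForm, conjTranspose_mul, hqH, ← haH,
      conjTranspose_conjTranspose]
  have hsum : E + star E = z - star u ⬝ᵥ u := by
    rw [hEs, hE, hz, mulVec_mulVec, mulVec_mulVec, ← dotProduct_add, ← add_mulVec,
      add_comm, hR, sub_mulVec, dotProduct_sub, one_mulVec]
    simp only [Matrix.mul_assoc]
  have hzn : z = star (d *ᵥ (q *ᵥ u)) ⬝ᵥ (d *ᵥ (q *ᵥ u)) := by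
    rw [hz, star_mulVec, star_mulVec, hqH, hdH, ← dotProduct_mulVec, ← dotProduct_mulVec]
    simp only [mulVec_mulVec, Matrix.mul_assoc]
  have hz0 : 0 ≤ z := by rw [hzn]; exact dotProduct_star_self_nonneg _
  have hu0 : 0 < star u ⬝ᵥ u := dotProduct_star_self_pos_iff.2 hu
  have hQre : 0 < Q.re := quadForm_re_pos P hPpos u hu
  have hQim : Q.im = 0 := by
    have := star_quadForm q u
    rw [hqH] at this
    exact Complex.conj_eq_iff_im.1 this
  have hz0' := (Complex.le_def.1 hz0)
  have hu0' := (Complex.lt_def.1 hu0)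
  have h1 := congrArg Complex.re main
  have h2 := congrArg Complex.re hsum
  simp [hQim, ← hz0'.2] at h1 h2
  have h3 : z.re * (c * l.re) ≤ z.re * (-1) := mul_le_mul_of_nonneg_left hc (by simpa using hz0'.1)
  have hz1 : 0 ≤ z.re := by simpa using hz0'.1
  have hu1 : 0 < (star u ⬝ᵥ u).re := by simpa using hu0'.1
  have h4 : s.re * Q.re < 0 := by rw [h1]; nlinarith
  exact neg_of_mul_neg_left h4 hQre.le

theorem max_propagates {p : ℕ} {Γ : Matrix (Fin p) (Fin p) ℝ} (hΓ : IsInterconnection Γ)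
    {k : Fin p} (hk : ∀ i, Relation.ReflTransGen (fun a b => 0 < Γ a b) i k)
    (v : Fin p → ℝ) (hv : Γ *ᵥ v = 0) (i : Fin p) : v i ≤ v k := by
  obtain ⟨j, -, hj⟩ := Finset.exists_max_image Finset.univ v ⟨k, Finset.mem_univ k⟩
  have hstep : ∀ a b, (∀ x, v x ≤ v a) → 0 < Γ a b → (∀ x, v x ≤ v b) := by
    intro a b hmax hab
    have h1 : ∑ x, Γ a x * (v a - v x) = 0 := by
      have := congrFun hv a
      simp only [mulVec, dotProduct, Pi.zero_apply] at this
      simp [mul_sub, Finset.sum_sub_distrib, ← Finset.sum_mul, hΓ.2 a, this]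
    have h2 : ∀ x ∈ Finset.univ, 0 ≤ Γ a x * (v a - v x) := by
      intro x _
      by_cases hx : a = x
      · subst hx; simp
      · exact mul_nonneg (hΓ.1 a x hx) (by linarith [hmax x])
    have h3 := (Finset.sum_eq_zero_iff_of_nonneg h2).1 h1 b (Finset.mem_univ b)
    have h4 : v a = v b := by
      rcases mul_eq_zero.1 h3 with h | h <;> linarith
    intro x; rw [← h4]; exact hmax x
  have : ∀ b, Relation.ReflTransGen (fun a b => 0 < Γ a b) j b → ∀ x, v x ≤ v b := by
    intro b hb
    induction hb with
    | refl => exact fun x => hj x (Finset.mem_univ x)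
    | tail _ hbc ih => exact hstep _ _ ih hbc
  exact this k (hk j) i

theorem ker_const {p : ℕ} {Γ : Matrix (Fin p) (Fin p) ℝ} (hΓ : IsInterconnection Γ)
    {k : Fin p} (hk : ∀ i, Relation.ReflTransGen (fun a b => 0 < Γ a b) i k)
    (v : Fin p → ℂ) (hv : Γ.map Complex.ofReal *ᵥ v = 0) (i : Fin p) : v i = v k := by
  have hR : ∀ x : Fin p → ℝ, Γ *ᵥ x = 0 → x i = x k := by
    intro x hx
    refine le_antisymm (max_propagates hΓ hk x hx i) ?_
    have := max_propagates hΓ hk (-x) (by rw [mulVec_neg, hx, neg_zero]) i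
    simpa using this
  refine Complex.ext (hR (fun i => (v i).re) ?_) (hR (fun i => (v i).im) ?_)
  · ext j
    have := congrArg Complex.re (congrFun hv j)
    simpa [mulVec, dotProduct] using this
  · ext j
    have := congrArg Complex.im (congrFun hv j)
    simpa [mulVec, dotProduct] using this

theorem shifted_spectrum (δ : ℝ) (hδ : 0 < δ)
    (p : ℕ) (Γ : Matrix (Fin p) (Fin p) ℝ) (hΓ : IsConnectedInterconnection Γ)
    (hspec : ∀ μ ∈ spectrum ℂ (Γ.map Complex.ofReal), μ ≠ 0 → μ.re ≤ -δ)
    (r : Fin p → ℝ) (hr : r ᵥ* Γ = 0) (hr1 : ∑ i, r i = 1) (μ : ℂ) (w : Fin p → ℂ)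
    (hw : w ≠ 0)
    (h : w ᵥ* ((Γ - δ • vecMulVec (fun _ => (1 : ℝ)) r).map Complex.ofReal) = μ • w) :
    μ.re ≤ -δ := by
  obtain ⟨v, hv, hGv⟩ := exists_right_eig _ μ ⟨w, hw, h⟩
  set g := Γ.map Complex.ofReal with hg
  set b : ℂ := (fun i => (r i : ℂ)) ⬝ᵥ v with hb
  have e1 : g *ᵥ v - (fun _ => (δ : ℂ) * b) = μ • v := by
    rw [← hGv]
    ext i
    simp [mulVec, dotProduct, hg, hb, sub_mul, Finset.sum_sub_distrib, Finset.mul_sum,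
      vecMulVec_apply, mul_assoc]
  have hrg : (fun i => (r i : ℂ)) ᵥ* g = 0 := by
    ext j
    have := congrArg Complex.ofReal (congrFun hr j)
    simpa [vecMul, dotProduct, hg] using this
  have hr1' : ∑ i, (r i : ℂ) = 1 := by exact_mod_cast congrArg Complex.ofReal hr1
  have e2 : -((δ : ℂ) * b) = μ * b := by
    have := congrArg (fun y => (fun i => (r i : ℂ)) ⬝ᵥ y) e1
    simp only [dotProduct_sub, dotProduct_mulVec, hrg, zero_dotProduct, dotProduct_smul] at this
    rw [← hb] at this
    rw [← smul_eq_mul (a := μ), ← this]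
    simp [dotProduct, ← Finset.sum_mul, hr1']
  by_cases hb0 : b = 0
  · have e3 : g *ᵥ v = μ • v := by
      rw [← e1, hb0]; ext i; simp
    have hμ0 : μ ≠ 0 := by
      rintro rfl
      rw [zero_smul] at e3
      obtain ⟨hI, k, hk⟩ := hΓ
      have hc := ker_const hI hk v e3
      have : b = v k := by
        rw [hb, dotProduct]
        simp_rw [hc]
        rw [← Finset.sum_mul, hr1', one_mul]
      apply hv
      ext i
      rw [hc i, ← this, hb0]; rfl
    refine hspec μ ?_ hμ0
    rw [← Matrix.spectrum_toLin']
    apply Module.End.HasEigenvalue.mem_spectrum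
    refine Module.End.hasEigenvalue_of_hasEigenvector (x := v) ⟨?_, hv⟩
    rw [Module.End.mem_eigenspace_iff, Matrix.toLin'_apply]
    exact e3
  · have : μ = -(δ : ℂ) := by
      apply mul_right_cancel₀ hb0
      rw [← e2]; ring
    rw [this]; simp

end helpers2

/-- If `P` is a symmetric positive-definite solution of the Riccati equation
`AP + PAᵀ + I - PCᵀCP = 0` and `δ > 0`, then the feedback law `L = max{1, δ⁻¹} PCᵀ`
synchronizes the array for every connected interconnection `Γ` whose nonzero eigenvalues
satisfy `Re(λ) ≤ -δ`: the solution `x(t) = exp(t(I_p ⊗ A + Γ ⊗ LC)) x(0)` converges to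
`(1rᵀ ⊗ exp(tA)) x(0)`, and each block synchronizes to `x̄(t) = (rᵀ ⊗ exp(tA)) x(0)`. -/
theorem detectable_synchronizable_strong_coupling
    (δ : ℝ) (hδ : 0 < δ)
    (n m : ℕ) (A : Matrix (Fin n) (Fin n) ℝ) (C : Matrix (Fin m) (Fin n) ℝ)
    (P : Matrix (Fin n) (Fin n) ℝ) (hPsymm : Pᵀ = P) (hPpos : P.PosDef)
    (hRiccati : A * P + P * Aᵀ + 1 - P * Cᵀ * C * P = 0)
    (p : ℕ) (Γ : Matrix (Fin p) (Fin p) ℝ) (hΓ : IsConnectedInterconnection Γ)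
    (hspec : ∀ μ ∈ spectrum ℂ (Γ.map Complex.ofReal), μ ≠ 0 → μ.re ≤ -δ)
    (r : Fin p → ℝ) (hr : r ᵥ* Γ = 0) (hr1 : ∑ i, r i = 1)
    (x0 : Fin p × Fin n → ℝ) :
    Tendsto (fun t : ℝ =>
        NormedSpace.exp (t • ((1 : Matrix (Fin p) (Fin p) ℝ) ⊗ₖ A
            + Γ ⊗ₖ ((max 1 δ⁻¹ • (P * Cᵀ)) * C))) *ᵥ x0
          - (vecMulVec (fun _ => (1 : ℝ)) r ⊗ₖ NormedSpace.exp (t • A)) *ᵥ x0)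
      atTop (nhds 0) ∧
    ∀ i : Fin p,
      Tendsto (fun t : ℝ => (fun k : Fin n =>
          (NormedSpace.exp (t • ((1 : Matrix (Fin p) (Fin p) ℝ) ⊗ₖ A
              + Γ ⊗ₖ ((max 1 δ⁻¹ • (P * Cᵀ)) * C))) *ᵥ x0) (i, k)
            - ∑ j : Fin p, r j * (NormedSpace.exp (t • A) *ᵥ fun l => x0 (j, l)) k))
        atTop (nhds 0) := by
  have hJΓ : vecMulVec (fun _ : Fin p => (1 : ℝ)) r * Γ = 0 := by
    rw [vecMulVec_mul, hr, vecMulVec_zero]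
  have hΓJ : Γ * vecMulVec (fun _ : Fin p => (1 : ℝ)) r = 0 := by
    rw [mul_vecMulVec]
    have : Γ *ᵥ (fun _ => (1 : ℝ)) = 0 := by
      ext i
      simpa [mulVec, dotProduct] using hΓ.1.2 i
    rw [this, zero_vecMulVec]
  have hJJ : vecMulVec (fun _ : Fin p => (1 : ℝ)) r * vecMulVec (fun _ : Fin p => (1 : ℝ)) r
      = vecMulVec (fun _ : Fin p => (1 : ℝ)) r := by
    ext i j
    simp [Matrix.mul_apply, vecMulVec_apply, ← Finset.sum_mul, hr1]
  set J := vecMulVec (fun _ : Fin p => (1 : ℝ)) r with hJ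
  set K := (max 1 δ⁻¹ • (P * Cᵀ)) * C with hK
  set M := (1 : Matrix (Fin p) (Fin p) ℝ) ⊗ₖ A + Γ ⊗ₖ K with hM
  set M' := (1 : Matrix (Fin p) (Fin p) ℝ) ⊗ₖ A + (Γ - δ • J) ⊗ₖ K with hM'
  have hmap : M'.map Complex.ofReal = (1 : Matrix (Fin p) (Fin p) ℂ) ⊗ₖ A.map Complex.ofReal
      + (Γ - δ • J).map Complex.ofReal ⊗ₖ K.map Complex.ofReal := by
    ext ⟨i, k⟩ ⟨j, l⟩
    by_cases hij : i = j <;> simp [hM', Matrix.one_apply, hij]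
  have hstab : ∀ y : Fin p × Fin n → ℝ,
      Tendsto (fun t : ℝ => NormedSpace.exp (t • M') *ᵥ y) atTop (𝓝 0) := by
    intro y
    have h1 := tendsto_exp_hurwitz (M'.map Complex.ofReal) (by
      rw [hmap]
      refine hurwitz_kron _ _ _ ?_
      intro l w hw hwl s u hu hs
      have hl := shifted_spectrum δ hδ p Γ hΓ hspec r hr hr1 l w hw hwl
      refine lyapunov_step A C P hPsymm hPpos hRiccati (max 1 δ⁻¹) l s ?_ u hu hs
      have h2 : 1 ≤ max 1 δ⁻¹ * δ := by
        calc 1 = δ⁻¹ * δ := (inv_mul_cancel₀ hδ.ne').symm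
          _ ≤ _ := mul_le_mul_of_nonneg_right (le_max_right _ _) hδ.le
      have h3 : 0 < max 1 δ⁻¹ := lt_max_of_lt_left one_pos
      nlinarith) (fun i => (y i : ℂ))
    rw [tendsto_pi_nhds] at h1 ⊢
    intro i
    have h2 := (Complex.continuous_re.tendsto _).comp (h1 i)
    refine h2.congr fun t => ?_
    have : (t : ℂ) • M'.map Complex.ofReal = (t • M').map Complex.ofReal := by
      ext a b; simp
    rw [Function.comp_apply, this, ← matrix_exp_map]
    simp [mulVec, dotProduct]
  have key : ∀ t : ℝ, NormedSpace.exp (t • M) *ᵥ x0 - (J ⊗ₖ NormedSpace.exp (t • A)) *ᵥ x0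
      = ((1 - J) ⊗ₖ (1 : Matrix (Fin n) (Fin n) ℝ)) *ᵥ (NormedSpace.exp (t • M') *ᵥ x0) := by
    intro t
    have h1 : NormedSpace.exp (t • M) * (J ⊗ₖ (1 : Matrix (Fin n) (Fin n) ℝ))
        = J ⊗ₖ NormedSpace.exp (t • A) := by
      rw [matrix_exp_semiconj (Y := (1 : Matrix (Fin p) (Fin p) ℝ) ⊗ₖ (t • A)),
        ← matrix_exp_one_kron, ← mul_kronecker_mul, mul_one, one_mul]
      rw [kronecker_smul, smul_mul_assoc, mul_smul_comm, hM, add_mul]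
      simp only [← mul_kronecker_mul, hΓJ, zero_kronecker, one_mul, mul_one, add_zero]
    have h2 : NormedSpace.exp (t • M) * ((1 - J) ⊗ₖ (1 : Matrix (Fin n) (Fin n) ℝ))
        = ((1 - J) ⊗ₖ (1 : Matrix (Fin n) (Fin n) ℝ)) * NormedSpace.exp (t • M') := by
      apply matrix_exp_semiconj
      rw [smul_mul_assoc, mul_smul_comm, hM, hM', add_mul, mul_add]
      simp only [← mul_kronecker_mul, one_mul, mul_one]
      have h3 : Γ * (1 - J) = (1 - J) * (Γ - δ • J) := by
        simp only [mul_sub, sub_mul, one_mul, mul_one, hΓJ, hJΓ, mul_smul_comm, hJJ]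
        simp
      rw [h3]
    have h4 : (1 - J) ⊗ₖ (1 : Matrix (Fin n) (Fin n) ℝ)
        = 1 - J ⊗ₖ (1 : Matrix (Fin n) (Fin n) ℝ) := by
      rw [eq_sub_iff_add_eq, ← add_kronecker, sub_add_cancel, one_kronecker_one]
    rw [mulVec_mulVec, ← h2, ← h1, ← sub_mulVec, h4, mul_sub, mul_one]
  have hfirst : Tendsto (fun t : ℝ =>
      NormedSpace.exp (t • M) *ᵥ x0 - (J ⊗ₖ NormedSpace.exp (t • A)) *ᵥ x0)
      atTop (nhds 0) := by
    simp_rw [key]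
    have hc : Continuous fun y : Fin p × Fin n → ℝ =>
        ((1 - J) ⊗ₖ (1 : Matrix (Fin n) (Fin n) ℝ)) *ᵥ y :=
      continuous_const.matrix_mulVec continuous_id
    have := (hc.tendsto 0).comp (hstab x0)
    simpa [Function.comp_def] using this
  refine ⟨hfirst, fun i => ?_⟩
  rw [tendsto_pi_nhds] at hfirst ⊢
  intro k
  refine (hfirst (i, k)).congr fun t => ?_
  simp [mulVec, dotProduct, Fintype.sum_prod_type, hJ, vecMulVec_apply, Finset.mul_sum,
    mul_assoc]
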